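/- Let V be a real Hilbert space, Λ ⊂ ℕ^d a downward closed set of cardinality m ≥ 1, and P ∈ P_Λ a V-valued polynomial. Then sup_{y∈Y} ‖P(y)‖ ≤ m·(∫_Y ‖P(y)‖² dρ(y))^{1/2}, where Y = [−1,1]^d and ρ is the uniform probability measure on Y. -/

import Mathlib

open MeasureTheory

/-- The parameter cube `Y = [-1,1]^d`. -/
def cube (d : ℕ) : Set (Fin d → ℝ) := Set.univ.pi fun _ => Set.Icc (-1 : ℝ) 1

/-- A finite set `Λ ⊂ ℕ^d` is downward closed if `ν ∈ Λ` and `μ ≤ ν` (componentwise)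
imply `μ ∈ Λ`. -/
def DownwardClosed {d : ℕ} (Λ : Finset (Fin d → ℕ)) : Prop :=
  ∀ ν ∈ Λ, ∀ μ : Fin d → ℕ, μ ≤ ν → μ ∈ Λ

/-- The `V`-valued polynomial `y ↦ ∑_{ν ∈ Λ} y^ν • a_ν`, with `y^ν = ∏_j y_j^{ν_j}`. -/
noncomputable def polyEval {d : ℕ} {V : Type*} [AddCommGroup V] [Module ℝ V]
    (Λ : Finset (Fin d → ℕ)) (a : (Fin d → ℕ) → V) (y : Fin d → ℝ) : V :=
  ∑ ν ∈ Λ, (∏ j, y j ^ ν j) • a ν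

/-- `δ_m(v)`: the error of best uniform approximation of `v` on `Y = [-1,1]^d`
by `V`-valued polynomials supported on a downward closed index set of cardinality `m`. -/
noncomputable def deltaApprox {d : ℕ} {V : Type*} [NormedAddCommGroup V] [Module ℝ V]
    (v : (Fin d → ℝ) → V) (m : ℕ) : ℝ :=
  sInf { e | ∃ (Λ : Finset (Fin d → ℕ)) (a : (Fin d → ℕ) → V),
    DownwardClosed Λ ∧ Λ.card = m ∧ e = ⨆ y ∈ cube d, ‖v y - polyEval Λ a y‖ }

/-- Membership in the approximation class `A^r`: `δ_m(v) ≤ C m^{-r}` for all `m ≥ 1`. -/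
def MemA {d : ℕ} {V : Type*} [NormedAddCommGroup V] [Module ℝ V]
    (r : ℝ) (v : (Fin d → ℝ) → V) : Prop :=
  ∃ C : ℝ, 0 ≤ C ∧ ∀ m : ℕ, 1 ≤ m → deltaApprox v m ≤ C * (m : ℝ) ^ (-r)

/-- The seminorm `|v|_{A^r}`: the smallest constant `C ≥ 0` with
`δ_m(v) ≤ C m^{-r}` for all `m ≥ 1`. -/
noncomputable def semiA {d : ℕ} {V : Type*} [NormedAddCommGroup V] [Module ℝ V]
    (r : ℝ) (v : (Fin d → ℝ) → V) : ℝ :=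
  sInf { C | 0 ≤ C ∧ ∀ m : ℕ, 1 ≤ m → deltaApprox v m ≤ C * (m : ℝ) ^ (-r) }

/-- The norm `‖v‖_{A^r} = max{‖v‖_{L^∞(Y,V)}, |v|_{A^r}}`. -/
noncomputable def normA {d : ℕ} {V : Type*} [NormedAddCommGroup V] [Module ℝ V]
    (r : ℝ) (v : (Fin d → ℝ) → V) : ℝ :=
  max (⨆ y ∈ cube d, ‖v y‖) (semiA r v)

/-- The uniform probability measure on the cube `Y = [-1,1]^d`. -/
noncomputable def uniformCube (d : ℕ) : Measure (Fin d → ℝ) :=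
  Measure.pi fun _ => (2 : ENNReal)⁻¹ • (volume.restrict (Set.Icc (-1 : ℝ) 1))

/-!
Expand the polynomial in the tensorised Legendre basis `P_μ(y) = ∏ j, P_{μ_j}(y_j)`, which keeps the
index set because that set is downward closed. The Legendre polynomials are bounded by `1` on
`[-1,1]` and have mean square `1 / (2n + 1)`, so the Cauchy-Schwarz inequality bounds the square of
the constant by `∑_{μ ∈ Λ} ∏ j, (2μ_j + 1)`. As `∏ j, (2μ_j + 1)` counts the pairs `(α, β)` with
`α ⊔ β = μ`, and all these pairs lie in `Λ × Λ`, that sum is at most `m²`.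
-/

open Polynomial
open scoped Finset

section LegendrePolynomials

variable (K : Type*) [Field K]

/-- The Legendre polynomials, normalised by `P_n(1) = 1` and defined through Bonnet's recursion
`(n + 2) P_{n+2} = (2n + 3) X P_{n+1} - (n + 1) P_n`. -/
noncomputable def legendre : ℕ → K[X]
  | 0 => 1
  | 1 => X
  | n + 2 => C ((2 * n + 3) / (n + 2) : K) * X * legendre (n + 1)
      - C ((n + 1) / (n + 2) : K) * legendre n

/-- Sonin's function of the Legendre equation. Over `ℝ` it dominates `n (n + 1) P_n²` on `[-1,1]`,
agrees with it at `1`, and increases on `[0,1]`; it serves to bound `P_n`. -/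
noncomputable def legendreSonin (n : ℕ) : K[X] :=
  (n * (n + 1) : K[X]) * legendre K n ^ 2 + (1 - X ^ 2) * derivative (legendre K n) ^ 2

lemma legendre_eval_neg (n : ℕ) (x : K) :
    (legendre K n).eval (-x) = (-1) ^ n * (legendre K n).eval x := by
  induction n using Nat.twoStepInduction with
  | zero => simp [legendre]
  | one => simp [legendre]
  | more n ih ih' =>
    simp only [legendre, eval_sub, eval_mul, eval_C, eval_X, ih, ih']
    ring

variable [CharZero K]

lemma natCast_add_two_mul_legendre (n : ℕ) :
    (n + 2 : K[X]) * legendre K (n + 2) =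
      (2 * (n : K[X]) + 3) * X * legendre K (n + 1) - ((n : K[X]) + 1) * legendre K n := by
  have hn : (n + 2 : K) ≠ 0 := by exact_mod_cast (n + 1).succ_ne_zero
  have clear_denominator (c : K) : (n + 2 : K[X]) * C (c / (n + 2)) = C c := by
    have hcast : (n + 2 : K[X]) = C (n + 2 : K) := by
      simp only [map_add, map_natCast, map_ofNat]
    rw [hcast, ← C_mul, mul_div_cancel₀ _ hn]
  have hX := clear_denominator (2 * n + 3)
  have h1 := clear_denominator (n + 1)
  simp only [map_mul, map_add, map_natCast, map_ofNat, map_one] at hX h1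
  rw [legendre]
  linear_combination (X * legendre K (n + 1)) * hX - legendre K n * h1

lemma degree_legendre (n : ℕ) : (legendre K n).degree = n := by
  induction n using Nat.twoStepInduction with
  | zero => simp [legendre]
  | one => simp [legendre]
  | more n ih ih' =>
    have hlead : ((2 * n + 3) / (n + 2) : K) ≠ 0 := by
      refine div_ne_zero ?_ ?_ <;> norm_cast
    have hlow : ((n + 1) / (n + 2) : K) ≠ 0 := by
      refine div_ne_zero ?_ ?_ <;> norm_cast
    have hX : (C ((2 * n + 3) / (n + 2) : K) * X * legendre K (n + 1)).degree =
        ((n + 2 : ℕ) : WithBot ℕ) := by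
      rw [degree_mul, degree_C_mul_X hlead, ih']
      norm_cast
      ring_nf
    rw [legendre, degree_sub_eq_left_of_degree_lt, hX]
    rw [hX, degree_C_mul hlow, ih]
    norm_cast
    omega

/-- The Legendre polynomials as a polynomial sequence, one polynomial in each degree. -/
noncomputable def legendreSequence : Polynomial.Sequence K where
  elems' := legendre K
  degree_eq' := degree_legendre K

lemma legendre_eval_one (n : ℕ) : (legendre K n).eval 1 = 1 := by
  induction n using Nat.twoStepInduction with
  | zero => simp [legendre]
  | one => simp [legendre]
  | more n ih ih' =>
    have hn : (n + 2 : K) ≠ 0 := by exact_mod_cast (n + 1).succ_ne_zero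
    simp only [legendre, eval_sub, eval_mul, eval_C, eval_X, ih, ih']
    field_simp
    ring

lemma legendre_eval_neg_one (n : ℕ) : (legendre K n).eval (-1) = (-1) ^ n := by
  rw [legendre_eval_neg, legendre_eval_one, mul_one]

lemma derivative_legendre_recurrences (n : ℕ) :
    derivative (legendre K (n + 1)) =
        X * derivative (legendre K n) + (n + 1 : K[X]) * legendre K n ∧
      X * derivative (legendre K (n + 1)) - derivative (legendre K n) =
        (n + 1 : K[X]) * legendre K (n + 1) := by
  induction n with
  | zero => simp [legendre]
  | succ n ih =>
    obtain ⟨ih_forward, ih_backward⟩ := ih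
    have hn : (n + 2 : K[X]) ≠ 0 := by exact_mod_cast (n + 1).succ_ne_zero
    have hrec := natCast_add_two_mul_legendre K n
    have hrec' := congrArg derivative hrec
    simp only [derivative_mul, derivative_add, derivative_sub, derivative_natCast, derivative_X,
      derivative_one, derivative_ofNat] at hrec'
    have forward : derivative (legendre K (n + 2)) =
        X * derivative (legendre K (n + 1)) + (n + 2 : K[X]) * legendre K (n + 1) := by
      apply mul_left_cancel₀ hn
      linear_combination hrec' + (n + 1) * ih_backward
    push_cast
    constructor
    · linear_combination forward
    · linear_combination X * forward + X * ih_backward - ih_forward - hrec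

lemma derivative_one_sub_X_sq_mul_derivative_legendre (n : ℕ) :
    derivative ((1 - X ^ 2) * derivative (legendre K n)) =
      -(n * (n + 1) : K[X]) * legendre K n := by
  cases n with
  | zero => simp [legendre]
  | succ n =>
    obtain ⟨forward, backward⟩ := derivative_legendre_recurrences K n
    have hflux : (1 - X ^ 2) * derivative (legendre K (n + 1)) =
        (n + 1 : K[X]) * (legendre K n - X * legendre K (n + 1)) := by
      linear_combination forward - X * backward
    rw [hflux]
    simp only [derivative_mul, derivative_add, derivative_sub, derivative_natCast, derivative_X,
      derivative_one]
    push_cast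
    linear_combination -(n + 1) * backward

lemma derivative_legendre_wronskian (m n : ℕ) :
    derivative ((1 - X ^ 2) * derivative (legendre K m) * legendre K n
        - (1 - X ^ 2) * derivative (legendre K n) * legendre K m) =
      C ((n - m) * (n + m + 1) : K) * (legendre K m * legendre K n) := by
  rw [derivative_sub, derivative_mul, derivative_mul (f := (1 - X ^ 2) * derivative (legendre K n)),
    derivative_one_sub_X_sq_mul_derivative_legendre,
    derivative_one_sub_X_sq_mul_derivative_legendre]
  simp only [map_mul, map_sub, map_add, map_natCast, map_one]
  ring

-- The bracket has equal values at `1` and `-1`, so it yields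
-- `(2n + 3) ∫ P_{n+1}² = (2n + 1) ∫ P_n²` without any appeal to orthogonality.
lemma derivative_legendre_quadratic (n : ℕ) :
    derivative (X * (legendre K n ^ 2 + legendre K (n + 1) ^ 2)
        - 2 * legendre K n * legendre K (n + 1)) =
      C (2 * n + 3 : K) * legendre K (n + 1) ^ 2 - C (2 * n + 1 : K) * legendre K n ^ 2 := by
  obtain ⟨forward, backward⟩ := derivative_legendre_recurrences K n
  simp only [derivative_mul, derivative_sub, derivative_X, derivative_pow, derivative_ofNat,
    map_mul, map_add, map_natCast, map_ofNat, map_one]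
  linear_combination 2 * legendre K (n + 1) * backward - 2 * legendre K n * forward

lemma derivative_legendreSonin (n : ℕ) :
    derivative (legendreSonin K n) = 2 * X * derivative (legendre K n) ^ 2 := by
  have hode := derivative_one_sub_X_sq_mul_derivative_legendre K n
  simp only [pow_two, derivative_mul, derivative_add, derivative_sub, derivative_X,
    derivative_one, derivative_natCast, legendreSonin] at hode ⊢
  linear_combination 2 * derivative (legendre K n) * hode

end LegendrePolynomials

section LegendreBound

lemma monotoneOn_legendreSonin_eval (n : ℕ) :
    MonotoneOn (fun t ↦ (legendreSonin ℝ n).eval t) (Set.Ici 0) := by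
  refine monotoneOn_of_deriv_nonneg (convex_Ici 0) (legendreSonin ℝ n).continuousOn
    (legendreSonin ℝ n).differentiable.differentiableOn fun t ht ↦ ?_
  rw [interior_Ici, Set.mem_Ioi] at ht
  rw [Polynomial.deriv, derivative_legendreSonin]
  simp only [eval_mul, eval_pow, eval_X, eval_ofNat]
  positivity

lemma abs_legendre_eval_le_one_of_nonneg (n : ℕ) {x : ℝ} (hx₀ : 0 ≤ x) (hx₁ : x ≤ 1) :
    |(legendre ℝ n).eval x| ≤ 1 := by
  rcases n.eq_zero_or_pos with rfl | hn
  · simp [legendre]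
  have sonin_le := monotoneOn_legendreSonin_eval n hx₀ (Set.mem_Ici.2 zero_le_one) hx₁
  simp only [legendreSonin, eval_add, eval_mul, eval_sub, eval_pow, eval_natCast, eval_one, eval_X,
    legendre_eval_one] at sonin_le
  have derivative_term_nonneg : 0 ≤ (1 - x ^ 2) * (derivative (legendre ℝ n)).eval x ^ 2 :=
    mul_nonneg (sub_nonneg.2 (pow_le_one₀ hx₀ hx₁)) (sq_nonneg _)
  have hn' : (0 : ℝ) < n * (n + 1) := by positivity
  rw [← sq_le_one_iff_abs_le_one]
  exact le_of_mul_le_mul_left (by linarith) hn'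

lemma abs_legendre_eval_le_one (n : ℕ) {x : ℝ} (hx : x ∈ Set.Icc (-1 : ℝ) 1) :
    |(legendre ℝ n).eval x| ≤ 1 := by
  rcases le_total 0 x with h | h
  · exact abs_legendre_eval_le_one_of_nonneg n h hx.2
  · have hneg := abs_legendre_eval_le_one_of_nonneg n (neg_nonneg.2 h) (neg_le.1 hx.1)
    rwa [legendre_eval_neg, abs_mul, abs_neg_one_pow, one_mul] at hneg

end LegendreBound

section LegendreIntegrals

/-- The uniform probability measure on `[-1,1]`, the one-dimensional factor of `uniformCube`. -/
noncomputable def uniformInterval : Measure ℝ :=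
  (2 : ENNReal)⁻¹ • volume.restrict (Set.Icc (-1 : ℝ) 1)

instance : IsFiniteMeasure uniformInterval :=
  Measure.smul_finite _ (by simp)

lemma uniformCube_eq_pi (d : ℕ) : uniformCube d = Measure.pi fun _ ↦ uniformInterval := rfl

lemma integrable_eval_uniformInterval (p : ℝ[X]) :
    Integrable (fun x ↦ p.eval x) uniformInterval :=
  p.continuousOn.integrableOn_Icc.smul_measure (by simp)

lemma integral_eval_derivative_uniformInterval (p : ℝ[X]) :
    ∫ x, (derivative p).eval x ∂uniformInterval = (p.eval 1 - p.eval (-1)) / 2 := by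
  rw [uniformInterval, integral_smul_measure, integral_Icc_eq_integral_Ioc,
    ← intervalIntegral.integral_of_le (by norm_num),
    intervalIntegral.integral_eq_sub_of_hasDerivAt (fun x _ ↦ p.hasDerivAt x)
      ((derivative p).continuous.intervalIntegrable _ _)]
  simp only [ENNReal.toReal_inv, ENNReal.toReal_ofNat, smul_eq_mul]
  ring

lemma integral_legendre_mul_legendre_of_ne {m n : ℕ} (h : m ≠ n) :
    ∫ x, (legendre ℝ m).eval x * (legendre ℝ n).eval x ∂uniformInterval = 0 := by
  have hwronskian := integral_eval_derivative_uniformInterval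
    ((1 - X ^ 2) * derivative (legendre ℝ m) * legendre ℝ n
      - (1 - X ^ 2) * derivative (legendre ℝ n) * legendre ℝ m)
  rw [derivative_legendre_wronskian] at hwronskian
  simp only [eval_sub, eval_mul, eval_pow, eval_X, eval_one, eval_C, integral_const_mul]
    at hwronskian
  have hcoeff : ((n - m) * (n + m + 1) : ℝ) ≠ 0 :=
    mul_ne_zero (sub_ne_zero.2 (Nat.cast_injective.ne h.symm)) (by positivity)
  exact (mul_eq_zero.1 (hwronskian.trans (by norm_num))).resolve_left hcoeff

lemma integral_legendre_sq (n : ℕ) :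
    ∫ x, (legendre ℝ n).eval x ^ 2 ∂uniformInterval = (2 * n + 1 : ℝ)⁻¹ := by
  induction n with
  | zero =>
    norm_num [legendre, uniformInterval, Measure.real]
  | succ n ih =>
    have hquadratic := integral_eval_derivative_uniformInterval
      (X * (legendre ℝ n ^ 2 + legendre ℝ (n + 1) ^ 2) - 2 * legendre ℝ n * legendre ℝ (n + 1))
    rw [derivative_legendre_quadratic] at hquadratic
    simp only [eval_sub] at hquadratic
    rw [integral_sub (integrable_eval_uniformInterval _) (integrable_eval_uniformInterval _)]
      at hquadratic
    simp only [eval_add, eval_mul, eval_pow, eval_C, eval_X, eval_ofNat, integral_const_mul,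
      legendre_eval_one, legendre_eval_neg_one, ih] at hquadratic
    have hboundary : ((-1 : ℝ) ^ n) ^ 2 = 1 := by rw [← pow_mul, mul_comm, pow_mul]; norm_num
    have hstep : (2 * n + 3 : ℝ) * ∫ x, (legendre ℝ (n + 1)).eval x ^ 2 ∂uniformInterval = 1 := by
      have hcancel : (2 * n + 1 : ℝ) * (2 * n + 1 : ℝ)⁻¹ = 1 := mul_inv_cancel₀ (by positivity)
      rw [pow_succ] at hquadratic
      linear_combination hquadratic + hcancel
    rw [← one_div, eq_div_iff (by positivity)]
    push_cast
    linear_combination hstep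

end LegendreIntegrals

section TensorLegendre

variable {ι : Type*} [Fintype ι]

/-- The multivariate Legendre polynomial `y ↦ ∏ j, P_{μ_j}(y_j)`, as a function on `ι → ℝ`. -/
noncomputable def tensorLegendre (μ : ι → ℕ) (y : ι → ℝ) : ℝ :=
  ∏ j, (legendre ℝ (μ j)).eval (y j)

lemma abs_tensorLegendre_le_one (μ : ι → ℕ) {y : ι → ℝ} (hy : ∀ j, y j ∈ Set.Icc (-1 : ℝ) 1) :
    |tensorLegendre μ y| ≤ 1 := by
  rw [tensorLegendre, Finset.abs_prod]
  exact Finset.prod_le_one (fun _ _ ↦ abs_nonneg _) fun j _ ↦ abs_legendre_eval_le_one _ (hy j)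

lemma integral_tensorLegendre_sq (μ : ι → ℕ) :
    ∫ y, tensorLegendre μ y ^ 2 ∂Measure.pi (fun _ ↦ uniformInterval) =
      (∏ j, (2 * μ j + 1 : ℝ))⁻¹ := by
  simp only [tensorLegendre, ← Finset.prod_pow]
  rw [integral_fintype_prod_eq_prod (f := fun j x ↦ (legendre ℝ (μ j)).eval x ^ 2)]
  simp only [integral_legendre_sq, Finset.prod_inv_distrib]

lemma integral_tensorLegendre_mul_of_ne {μ ν : ι → ℕ} (h : μ ≠ ν) :
    ∫ y, tensorLegendre μ y * tensorLegendre ν y ∂Measure.pi (fun _ ↦ uniformInterval) = 0 := by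
  obtain ⟨j, hj⟩ := Function.ne_iff.1 h
  simp only [tensorLegendre, ← Finset.prod_mul_distrib]
  rw [integral_fintype_prod_eq_prod
    (f := fun j x ↦ (legendre ℝ (μ j)).eval x * (legendre ℝ (ν j)).eval x)]
  exact Finset.prod_eq_zero (Finset.mem_univ j) (integral_legendre_mul_legendre_of_ne hj)

lemma memLp_tensorLegendre (μ : ι → ℕ) :
    MemLp (tensorLegendre μ) 2 (Measure.pi fun _ ↦ uniformInterval) := by
  have hcont : Continuous (tensorLegendre μ) := by
    unfold tensorLegendre
    fun_prop
  rw [memLp_two_iff_integrable_sq hcont.aestronglyMeasurable]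
  simp only [tensorLegendre, ← Finset.prod_pow, ← eval_pow]
  exact Integrable.fintype_prod (f := fun j x ↦ (legendre ℝ (μ j) ^ 2).eval x)
    fun j ↦ integrable_eval_uniformInterval _

end TensorLegendre

section OrthogonalExpansions

variable {Ω ι V : Type*} [MeasurableSpace Ω] {P : Measure Ω} {s : Finset ι} {φ : ι → Ω → ℝ}
  [NormedAddCommGroup V] [InnerProductSpace ℝ V]

lemma integral_norm_sq_sum_smul (hφ : ∀ i ∈ s, MemLp (φ i) 2 P)
    (horth : (s : Set ι).Pairwise fun i j ↦ ∫ ω, φ i ω * φ j ω ∂P = 0) (b : ι → V) :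
    ∫ ω, ‖∑ i ∈ s, φ i ω • b i‖ ^ 2 ∂P = ∑ i ∈ s, (∫ ω, φ i ω ^ 2 ∂P) * ‖b i‖ ^ 2 := by
  have hexpand (ω : Ω) : ‖∑ i ∈ s, φ i ω • b i‖ ^ 2 =
      ∑ i ∈ s, ∑ j ∈ s, φ i ω * φ j ω * inner ℝ (b i) (b j) := by
    rw [← real_inner_self_eq_norm_sq, sum_inner]
    simp only [inner_sum, real_inner_smul_left, real_inner_smul_right, mul_assoc, mul_left_comm]
  have hint {i j : ι} (hi : i ∈ s) (hj : j ∈ s) :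
      Integrable (fun ω ↦ φ i ω * φ j ω * inner ℝ (b i) (b j)) P :=
    ((hφ i hi).integrable_mul (hφ j hj)).mul_const _
  simp only [hexpand]
  rw [integral_finsetSum _ fun i hi ↦ integrable_finsetSum _ fun j hj ↦ hint hi hj]
  refine Finset.sum_congr rfl fun i hi ↦ ?_
  rw [integral_finsetSum _ fun j hj ↦ hint hi hj, Finset.sum_eq_single_of_mem i hi]
  · simp only [integral_mul_const, real_inner_self_eq_norm_sq, pow_two]
  · intro j hj hji
    rw [integral_mul_const, horth hi hj hji.symm, zero_mul]

lemma norm_sum_smul_le_sqrt_mul_sqrt_integral (hφ : ∀ i ∈ s, MemLp (φ i) 2 P)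
    (horth : (s : Set ι).Pairwise fun i j ↦ ∫ ω, φ i ω * φ j ω ∂P = 0)
    (hpos : ∀ i ∈ s, 0 < ∫ ω, φ i ω ^ 2 ∂P) (b : ι → V) (ω : Ω) :
    ‖∑ i ∈ s, φ i ω • b i‖ ≤
      √(∑ i ∈ s, φ i ω ^ 2 / ∫ η, φ i η ^ 2 ∂P) * √(∫ η, ‖∑ i ∈ s, φ i η • b i‖ ^ 2 ∂P) := by
  rw [integral_norm_sq_sum_smul hφ horth]
  set N : ι → ℝ := fun i ↦ ∫ η, φ i η ^ 2 ∂P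
  calc ‖∑ i ∈ s, φ i ω • b i‖
      ≤ ∑ i ∈ s, ‖φ i ω • b i‖ := norm_sum_le _ _
    _ = ∑ i ∈ s, |φ i ω| / √(N i) * (√(N i) * ‖b i‖) := by
        refine Finset.sum_congr rfl fun i hi ↦ ?_
        have hN : √(N i) ≠ 0 := (Real.sqrt_pos.2 (hpos i hi)).ne'
        rw [norm_smul, Real.norm_eq_abs, ← mul_assoc, div_mul_cancel₀ _ hN]
    _ ≤ √(∑ i ∈ s, (|φ i ω| / √(N i)) ^ 2) * √(∑ i ∈ s, (√(N i) * ‖b i‖) ^ 2) :=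
        Real.sum_mul_le_sqrt_mul_sqrt _ _ _
    _ = √(∑ i ∈ s, φ i ω ^ 2 / N i) * √(∑ i ∈ s, N i * ‖b i‖ ^ 2) := by
        congr 2 <;> refine Finset.sum_congr rfl fun i hi ↦ ?_
        · rw [div_pow, sq_abs, Real.sq_sqrt (hpos i hi).le]
        · rw [mul_pow, Real.sq_sqrt (hpos i hi).le]

end OrthogonalExpansions

section LowerSets

lemma card_filter_max_eq (n : ℕ) :
    #{p ∈ Finset.Iic n ×ˢ Finset.Iic n | p.1 ⊔ p.2 = n} = 2 * n + 1 := by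
  have hcompl : {p ∈ Finset.Iic n ×ˢ Finset.Iic n | ¬p.1 ⊔ p.2 = n} =
      Finset.Iio n ×ˢ Finset.Iio n := by
    ext p
    simp only [Finset.mem_filter, Finset.mem_product, Finset.mem_Iic, Finset.mem_Iio]
    omega
  have hsplit := Finset.card_filter_add_card_filter_not
    (s := Finset.Iic n ×ˢ Finset.Iic n) (fun p ↦ p.1 ⊔ p.2 = n)
  rw [hcompl, Finset.card_product, Finset.card_product, Nat.card_Iic, Nat.card_Iio] at hsplit
  linarith

variable {ι : Type*} [Fintype ι]

lemma card_filter_sup_eq [DecidableEq ι] (ν : ι → ℕ) :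
    #{p ∈ Finset.Iic ν ×ˢ Finset.Iic ν | p.1 ⊔ p.2 = ν} = ∏ j, (2 * ν j + 1) := by
  simp only [← card_filter_max_eq, ← Fintype.card_piFinset]
  refine Finset.card_equiv (Equiv.arrowProdEquivProdArrow ι (fun _ ↦ ℕ) fun _ ↦ ℕ).symm fun p ↦ ?_
  simp only [Finset.mem_filter, Finset.mem_product, Finset.mem_Iic, Fintype.mem_piFinset,
    Pi.le_def, funext_iff, Pi.sup_apply, forall_and, Equiv.arrowProdEquivProdArrow,
    Equiv.coe_fn_symm_mk]

lemma sum_prod_two_mul_add_one_le_card_sq {Λ : Finset (ι → ℕ)}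
    (hΛ : IsLowerSet (Λ : Set (ι → ℕ))) : ∑ ν ∈ Λ, ∏ j, (2 * ν j + 1) ≤ #Λ ^ 2 := by
  classical
  calc ∑ ν ∈ Λ, ∏ j, (2 * ν j + 1)
      = ∑ ν ∈ Λ, #{p ∈ Finset.Iic ν ×ˢ Finset.Iic ν | p.1 ⊔ p.2 = ν} := by
        simp only [card_filter_sup_eq]
    _ ≤ ∑ ν ∈ Λ, #{p ∈ Λ ×ˢ Λ | p.1 ⊔ p.2 = ν} := by
        refine Finset.sum_le_sum fun ν hν ↦ ?_
        have hsub : Finset.Iic ν ⊆ Λ := fun α hα ↦ hΛ (Finset.mem_Iic.1 hα) hν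
        gcongr
    _ = #{p ∈ Λ ×ˢ Λ | p.1 ⊔ p.2 ∈ Λ} := Finset.sum_card_fiberwise_eq_card_filter _ _ _
    _ ≤ #(Λ ×ˢ Λ) := Finset.card_filter_le _ _
    _ = #Λ ^ 2 := by rw [Finset.card_product, pow_two]

end LowerSets

section PolynomialsOnLowerSets

lemma exists_X_pow_eq_sum_smul {K : Type*} [Field K] (S : Polynomial.Sequence K) (n : ℕ) :
    ∃ c : ℕ → K, X ^ n = ∑ k ∈ Finset.Iic n, c k • S k := by
  have hmem : (X ^ n : K[X]) ∈ Submodule.span K (S '' (Finset.Iic n : Set ℕ)) := by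
    rw [Finset.coe_Iic, S.span_degreeLE fun i _ ↦ (leadingCoeff_ne_zero.2 (S.ne_zero i)).isUnit,
      mem_degreeLE]
    exact degree_X_pow_le n
  obtain ⟨c, hc⟩ := Submodule.mem_span_image_finset_iff_exists_fun' K |>.1 hmem
  exact ⟨c, hc.symm⟩

lemma exists_prod_pow_eq_sum_mul_prod_eval {K ι : Type*} [Field K] [Fintype ι] [DecidableEq ι]
    (S : Polynomial.Sequence K) (ν : ι → ℕ) :
    ∃ c : (ι → ℕ) → K, ∀ y : ι → K,
      ∏ j, y j ^ ν j = ∑ μ ∈ Finset.Iic ν, (∏ j, (S (μ j)).eval (y j)) * c μ := by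
  choose c hc using exists_X_pow_eq_sum_smul S
  refine ⟨fun μ ↦ ∏ j, c (ν j) (μ j), fun y ↦ ?_⟩
  have hpow (j : ι) :
      y j ^ ν j = ∑ k ∈ Finset.Iic (ν j), (S k).eval (y j) * c (ν j) k := by
    simpa [eval_finsetSum, mul_comm] using congrArg (eval (y j)) (hc (ν j))
  simp only [hpow, Finset.prod_univ_sum, ← Finset.prod_mul_distrib]
  -- `Finset.Iic ν` unfolds to `Fintype.piFinset fun j ↦ Finset.Iic (ν j)`.
  rfl

variable {d : ℕ} {V : Type*} {Λ : Finset (Fin d → ℕ)}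

lemma DownwardClosed.isLowerSet (hΛ : DownwardClosed Λ) : IsLowerSet (Λ : Set (Fin d → ℕ)) :=
  fun ν μ hμν hν ↦ hΛ ν hν μ hμν

lemma exists_polyEval_eq_sum_smul [AddCommGroup V] [Module ℝ V]
    (S : Polynomial.Sequence ℝ) (hΛ : DownwardClosed Λ) (a : (Fin d → ℕ) → V) :
    ∃ b : (Fin d → ℕ) → V, ∀ y,
      polyEval Λ a y = ∑ μ ∈ Λ, (∏ j, (S (μ j)).eval (y j)) • b μ := by
  classical
  choose c hc using exists_prod_pow_eq_sum_mul_prod_eval (ι := Fin d) S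
  refine ⟨fun μ ↦ ∑ ν ∈ Λ with μ ≤ ν, c ν μ • a ν, fun y ↦ ?_⟩
  simp only [polyEval, hc, Finset.sum_smul, Finset.smul_sum, smul_smul]
  refine Finset.sum_comm' fun ν μ ↦ ?_
  rw [Finset.mem_filter, Finset.mem_Iic]
  exact ⟨fun ⟨hν, hμν⟩ ↦ ⟨⟨hν, hμν⟩, hΛ ν hν μ hμν⟩, fun ⟨h, _⟩ ↦ h⟩

lemma norm_polyEval_le_card_mul_sqrt_integral [NormedAddCommGroup V] [InnerProductSpace ℝ V]
    (hΛ : DownwardClosed Λ) (a : (Fin d → ℕ) → V) {y : Fin d → ℝ} (hy : y ∈ cube d) :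
    ‖polyEval Λ a y‖ ≤ #Λ * √(∫ z, ‖polyEval Λ a z‖ ^ 2 ∂uniformCube d) := by
  obtain ⟨b, hb⟩ : ∃ b : (Fin d → ℕ) → V, ∀ z,
      polyEval Λ a z = ∑ μ ∈ Λ, tensorLegendre μ z • b μ :=
    exists_polyEval_eq_sum_smul (legendreSequence ℝ) hΛ a
  have christoffel_le : ∑ μ ∈ Λ, tensorLegendre μ y ^ 2 /
      ∫ z, tensorLegendre μ z ^ 2 ∂uniformCube d ≤ (#Λ : ℝ) ^ 2 := by
    calc _ = ∑ μ ∈ Λ, tensorLegendre μ y ^ 2 * ∏ j, (2 * μ j + 1 : ℝ) := by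
          simp only [uniformCube_eq_pi, integral_tensorLegendre_sq, div_inv_eq_mul]
      _ ≤ ∑ μ ∈ Λ, ∏ j, (2 * μ j + 1 : ℝ) := by
          refine Finset.sum_le_sum fun μ _ ↦ mul_le_of_le_one_left (by positivity) ?_
          exact (sq_le_one_iff_abs_le_one _).2
            (abs_tensorLegendre_le_one μ fun j ↦ hy j (Set.mem_univ j))
      _ ≤ (#Λ : ℝ) ^ 2 := by exact_mod_cast sum_prod_two_mul_add_one_le_card_sq hΛ.isLowerSet
  simp only [hb, uniformCube_eq_pi] at christoffel_le ⊢
  refine (norm_sum_smul_le_sqrt_mul_sqrt_integral (fun μ _ ↦ memLp_tensorLegendre μ)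
    (fun μ _ ν _ h ↦ integral_tensorLegendre_mul_of_ne h) (fun μ _ ↦ ?_) b y).trans ?_
  · rw [integral_tensorLegendre_sq]
    positivity
  · gcongr
    exact Real.sqrt_le_left (by positivity) |>.2 christoffel_le

end PolynomialsOnLowerSets

theorem statement8 {d : ℕ} (hd : 0 < d) {V : Type*} [NormedAddCommGroup V]
    [InnerProductSpace ℝ V]
    (Λ : Finset (Fin d → ℕ)) (hΛ : DownwardClosed Λ)
    (m : ℕ) (hm : 1 ≤ m) (hcard : Λ.card = m) (a : (Fin d → ℕ) → V) :
    (⨆ y ∈ cube d, ‖polyEval Λ a y‖) ≤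
      m * Real.sqrt (∫ y, ‖polyEval Λ a y‖ ^ 2 ∂(uniformCube d)) := by
  have bound_nonneg : 0 ≤ m * Real.sqrt (∫ y, ‖polyEval Λ a y‖ ^ 2 ∂(uniformCube d)) := by
    positivity
  refine Real.iSup_le (fun y ↦ Real.iSup_le (fun hy ↦ ?_) bound_nonneg) bound_nonneg
  rw [← hcard]
  exact norm_polyEval_le_card_mul_sqrt_integral hΛ a hy
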